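/- arXiv:1511.05906 — 6 statements merged into one kernel-verified Lean document; each statement's English description precedes it below -/
import Mathlib

section
/- Let T : [0,1] → [0,1] be a Markov interval map satisfying hypotheses (A1)–(A4). Then T is conservative with respect to Lebesgue measure: for every Borel set A ⊆ [0,1] of positive Lebesgue measure, almost every point of A returns to A infinitely often under iteration of T (equivalently, there is no wandering set of positive Lebesgue measure). -/
open MeasureTheory Set Filter

/-- An interval map `T : [0,1] → [0,1]` which is Markov with respect to the
partition `{[a_j, a_{j+1}]}` given by the strictly increasing sequence
`0 = a_0 < a_1 < ⋯` with supremum `1`, satisfying hypotheses (A1)–(A4).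
The branch extensions are `φ j`, with first and second derivatives
`φd j` and `φdd j` (taken within `[a_j, a_{j+1}]`). -/
structure IntervalMapSetup where
  T : ℝ → ℝ
  a : ℕ → ℝ
  φ : ℕ → ℝ → ℝ
  φd : ℕ → ℝ → ℝ
  φdd : ℕ → ℝ → ℝ
  Λ : ℝ
  K : ℝ
  β : ℝ
  c₁ : ℝ
  c₂ : ℝ
  ha0 : a 0 = 0
  ha_mono : StrictMono a
  ha_lt : ∀ j, a j < 1
  ha_lim : Tendsto a atTop (nhds 1)
  hT_maps : MapsTo T (Icc 0 1) (Icc 0 1)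
  -- `T` coincides with the branch `φ j` on the open interval `(a_j, a_{j+1})`
  hT_eq : ∀ j, ∀ x ∈ Ioo (a j) (a (j+1)), T x = φ j x
  -- (A1): each branch is a bijection onto `[0,1]`, `C²` up to the boundary
  hφ_bij : ∀ j, BijOn (φ j) (Icc (a j) (a (j+1))) (Icc 0 1)
  hφ_d : ∀ j, ∀ x ∈ Icc (a j) (a (j+1)),
    HasDerivWithinAt (φ j) (φd j x) (Icc (a j) (a (j+1))) x
  hφ_dd : ∀ j, ∀ x ∈ Icc (a j) (a (j+1)),
    HasDerivWithinAt (φd j) (φdd j x) (Icc (a j) (a (j+1))) x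
  hφdd_cont : ∀ j, ContinuousOn (φdd j) (Icc (a j) (a (j+1)))
  -- (A2): uniform expansion on branches `j ≥ 1`
  hΛ : 1 < Λ
  hA2 : ∀ j, 1 ≤ j → ∀ x ∈ Icc (a j) (a (j+1)), Λ ≤ |φd j x|
  -- (A3): distortion bound
  hK : 0 < K
  hA3 : ∀ j, ∀ x ∈ Icc (a j) (a (j+1)), |φdd j x| / (φd j x) ^ 2 ≤ K
  -- (A4): indifferent fixed point at 0
  hβ : 0 ≤ β
  hc₁ : 0 < c₁
  hc₁₂ : c₁ < c₂
  hA4_conv : ConvexOn ℝ (Icc (a 0) (a 1)) (φ 0)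
  hA4_fix : φ 0 0 = 0
  hA4_d1 : φd 0 0 = 1
  hA4_exp : ∀ x : ℝ, 0 < x → x ≤ a 1 → 1 < φd 0 x
  hA4_dd : ∀ x ∈ Ioo (0:ℝ) (a 1), c₁ * x ^ β ≤ φdd 0 x ∧ φdd 0 x ≤ c₂ * x ^ β

namespace IntervalMapSetup

/-- union of the open partition intervals -/
def U (S : IntervalMapSetup) : Set ℝ := ⋃ j, Ioo (S.a j) (S.a (j+1))

/-- points whose orbit never meets the partition points -/
def X (S : IntervalMapSetup) : Set ℝ := {x | ∀ n, S.T^[n] x ∈ S.U}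

/-- inverse branches -/
noncomputable def g (S : IntervalMapSetup) (j : ℕ) : ℝ → ℝ :=
  Function.invFunOn (S.φ j) (Icc (S.a j) (S.a (j+1)))

lemma a_lt (S : IntervalMapSetup) (j : ℕ) : S.a j < S.a (j+1) := S.ha_mono (Nat.lt_succ_self j)

lemma a_nonneg (S : IntervalMapSetup) (j : ℕ) : 0 ≤ S.a j := by
  rw [← S.ha0]; exact S.ha_mono.monotone (Nat.zero_le j)

lemma Ioo_sub (S : IntervalMapSetup) (j : ℕ) : Ioo (S.a j) (S.a (j+1)) ⊆ Ioo 0 1 :=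
  fun _ hx => ⟨(S.a_nonneg j).trans_lt hx.1, hx.2.trans (S.ha_lt _)⟩

lemma U_sub (S : IntervalMapSetup) : S.U ⊆ Ioo 0 1 := iUnion_subset (S.Ioo_sub)

lemma X_sub_U (S : IntervalMapSetup) : S.X ⊆ S.U := fun _ hx => hx 0

lemma X_sub (S : IntervalMapSetup) : S.X ⊆ Ioo 0 1 := S.X_sub_U.trans S.U_sub

lemma X_T (S : IntervalMapSetup) {x : ℝ} (hx : x ∈ S.X) : S.T x ∈ S.X := fun n => hx (n+1)

lemma X_iter (S : IntervalMapSetup) {x : ℝ} (hx : x ∈ S.X) (n : ℕ) : S.T^[n] x ∈ S.X := by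
  intro m
  rw [← Function.iterate_add_apply]; exact hx _

lemma φ_cont (S : IntervalMapSetup) (j : ℕ) : ContinuousOn (S.φ j) (Icc (S.a j) (S.a (j+1))) :=
  fun x hx => (S.hφ_d j x hx).continuousWithinAt

lemma g_mem (S : IntervalMapSetup) (j : ℕ) {y : ℝ} (hy : y ∈ Icc (0:ℝ) 1) :
    S.g j y ∈ Icc (S.a j) (S.a (j+1)) :=
  Function.invFunOn_mem ((S.hφ_bij j).surjOn hy)

lemma φ_g (S : IntervalMapSetup) (j : ℕ) {y : ℝ} (hy : y ∈ Icc (0:ℝ) 1) :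
    S.φ j (S.g j y) = y :=
  Function.invFunOn_eq ((S.hφ_bij j).surjOn hy)

lemma g_φ (S : IntervalMapSetup) (j : ℕ) {x : ℝ} (hx : x ∈ Icc (S.a j) (S.a (j+1))) :
    S.g j (S.φ j x) = x :=
  (S.hφ_bij j).injOn (S.g_mem j ((S.hφ_bij j).mapsTo hx)) hx
    (S.φ_g j ((S.hφ_bij j).mapsTo hx))

lemma g_mem_Ioo (S : IntervalMapSetup) (j : ℕ) {y : ℝ} (hy : y ∈ Ioo (0:ℝ) 1) :
    S.g j y ∈ Ioo (S.a j) (S.a (j+1)) := by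
  have hy' := Ioo_subset_Icc_self hy
  have hm := S.g_mem j hy'
  have he := S.φ_g j hy'
  obtain ⟨u, hu, hu0⟩ := (S.hφ_bij j).surjOn (left_mem_Icc.2 (zero_le_one (α := ℝ)))
  obtain ⟨v, hv, hv1⟩ := (S.hφ_bij j).surjOn (right_mem_Icc.2 (zero_le_one (α := ℝ)))
  have huv : S.φ j u < S.φ j (S.g j y) ∧ S.φ j (S.g j y) < S.φ j v := by
    rw [he, hu0, hv1]; exact hy
  rcases (S.φ_cont j).strictMonoOn_of_injOn_Icc' (S.a_lt j).le (S.hφ_bij j).injOn with h | h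
  · have h1 := (h.lt_iff_lt hu hm).1 huv.1
    have h2 := (h.lt_iff_lt hm hv).1 huv.2
    exact ⟨hu.1.trans_lt h1, h2.trans_le hv.2⟩
  · have h1 := (h.lt_iff_gt hu hm).1 huv.1
    have h2 := (h.lt_iff_gt hm hv).1 huv.2
    exact ⟨hv.1.trans_lt h2, h1.trans_le hu.2⟩

lemma φ_hasDerivAt (S : IntervalMapSetup) (j : ℕ) {x : ℝ} (hx : x ∈ Ioo (S.a j) (S.a (j+1))) :
    HasDerivAt (S.φ j) (S.φd j x) x :=
  (S.hφ_d j x (Ioo_subset_Icc_self hx)).hasDerivAt (Icc_mem_nhds hx.1 hx.2)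

lemma φd_hasDerivAt (S : IntervalMapSetup) (j : ℕ) {x : ℝ} (hx : x ∈ Ioo (S.a j) (S.a (j+1))) :
    HasDerivAt (S.φd j) (S.φdd j x) x :=
  (S.hφ_dd j x (Ioo_subset_Icc_self hx)).hasDerivAt (Icc_mem_nhds hx.1 hx.2)

lemma φd_ge (S : IntervalMapSetup) (j : ℕ) {x : ℝ} (hx : x ∈ Ioo (S.a j) (S.a (j+1))) :
    1 ≤ |S.φd j x| := by
  rcases Nat.eq_zero_or_pos j with rfl | hj
  · have := S.hA4_exp x (by have := hx.1; rwa [S.ha0] at this) hx.2.le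
    exact this.le.trans (le_abs_self _)
  · exact S.hΛ.le.trans (S.hA2 j hj x (Ioo_subset_Icc_self hx))

lemma φd_ne (S : IntervalMapSetup) (j : ℕ) {x : ℝ} (hx : x ∈ Ioo (S.a j) (S.a (j+1))) :
    S.φd j x ≠ 0 := by
  intro h
  have := S.φd_ge j hx
  rw [h] at this; norm_num at this

lemma φ_expand (S : IntervalMapSetup) (j : ℕ) {x y : ℝ} (hx : x ∈ Ioo (S.a j) (S.a (j+1)))
    (hy : y ∈ Ioo (S.a j) (S.a (j+1))) (hxy : x < y) : |y - x| ≤ |S.φ j y - S.φ j x| := by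
  have hsub : Icc x y ⊆ Ioo (S.a j) (S.a (j+1)) := fun z hz =>
    ⟨hx.1.trans_le hz.1, hz.2.trans_lt hy.2⟩
  obtain ⟨c, hc, h⟩ := exists_hasDerivAt_eq_slope (S.φ j) (S.φd j) hxy
    ((S.φ_cont j).mono (hsub.trans Ioo_subset_Icc_self))
    (fun z hz => S.φ_hasDerivAt j (hsub (Ioo_subset_Icc_self hz)))
  have h1 := S.φd_ge j (hsub (Ioo_subset_Icc_self hc))
  have h2 : S.φ j y - S.φ j x = S.φd j c * (y - x) := by
    rw [h]; field_simp [(sub_pos.2 hxy).ne']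
  rw [h2, abs_mul]
  exact le_mul_of_one_le_left (abs_nonneg _) h1

lemma g_lip (S : IntervalMapSetup) (j : ℕ) {x y : ℝ} (hx : x ∈ Ioo (0:ℝ) 1)
    (hy : y ∈ Ioo (0:ℝ) 1) : |S.g j y - S.g j x| ≤ |y - x| := by
  have hx' := S.g_mem_Ioo j hx
  have hy' := S.g_mem_Ioo j hy
  rcases lt_trichotomy (S.g j x) (S.g j y) with h | h | h
  · have := S.φ_expand j hx' hy' h
    rwa [S.φ_g j (Ioo_subset_Icc_self hx), S.φ_g j (Ioo_subset_Icc_self hy)] at this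
  · simp [h]
  · have := S.φ_expand j hy' hx' h
    rwa [S.φ_g j (Ioo_subset_Icc_self hx), S.φ_g j (Ioo_subset_Icc_self hy),
      abs_sub_comm, abs_sub_comm x y] at this

lemma g_contAt (S : IntervalMapSetup) (j : ℕ) {y : ℝ} (hy : y ∈ Ioo (0:ℝ) 1) :
    ContinuousAt (S.g j) y := by
  have h1 : Tendsto (fun z => |z - y|) (nhds y) (nhds 0) := by
    have : Continuous (fun z : ℝ => |z - y|) := by fun_prop
    simpa using this.tendsto y
  rw [ContinuousAt, tendsto_iff_dist_tendsto_zero]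
  refine squeeze_zero' (Eventually.of_forall fun _ => dist_nonneg) ?_ h1
  filter_upwards [Ioo_mem_nhds hy.1 hy.2] with z hz
  rw [Real.dist_eq]; exact S.g_lip j hy hz

/-- derivative of inverse branches -/
noncomputable def gd (S : IntervalMapSetup) (j : ℕ) (y : ℝ) : ℝ := (S.φd j (S.g j y))⁻¹

lemma g_hasDerivAt (S : IntervalMapSetup) (j : ℕ) {y : ℝ} (hy : y ∈ Ioo (0:ℝ) 1) :
    HasDerivAt (S.g j) (S.gd j y) y := by
  refine HasDerivAt.of_local_left_inverse (S.g_contAt j hy)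
    (S.φ_hasDerivAt j (S.g_mem_Ioo j hy)) (S.φd_ne j (S.g_mem_Ioo j hy)) ?_
  filter_upwards [Ioo_mem_nhds hy.1 hy.2] with z hz
  exact S.φ_g j (Ioo_subset_Icc_self hz)

lemma gd_dist (S : IntervalMapSetup) (j : ℕ) {x y : ℝ} (hx : x ∈ Ioo (0:ℝ) 1)
    (hy : y ∈ Ioo (0:ℝ) 1) :
    |Real.log (S.gd j x) - Real.log (S.gd j y)| ≤ S.K * |x - y| := by
  have := Convex.norm_image_sub_le_of_norm_hasDerivWithin_le (s := Ioo (0:ℝ) 1)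
    (f := fun z => Real.log (S.φd j (S.g j z)))
    (f' := fun z => (S.φdd j (S.g j z) * S.gd j z) / S.φd j (S.g j z)) (C := S.K)
    (fun z hz => by
      have hz' := S.g_mem_Ioo j hz
      exact (((S.φd_hasDerivAt j hz').comp z (S.g_hasDerivAt j hz)).log
        (S.φd_ne j hz')).hasDerivWithinAt)
    (fun z hz => by
      have hz' := S.g_mem_Ioo j hz
      have h3 := S.hA3 j _ (Ioo_subset_Icc_self hz')
      rw [Real.norm_eq_abs, gd, ← div_eq_mul_inv, div_div, ← sq, abs_div, abs_of_nonneg (sq_nonneg (S.φd j (S.g j z)))]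
      exact h3) (convex_Ioo 0 1) hx hy
  simp only [gd, Real.log_inv]
  rw [Real.norm_eq_abs, Real.norm_eq_abs] at this
  rw [abs_sub_comm x y]
  convert this using 2
  ring

lemma gd_ne (S : IntervalMapSetup) (j : ℕ) {y : ℝ} (hy : y ∈ Ioo (0:ℝ) 1) : S.gd j y ≠ 0 :=
  inv_ne_zero (S.φd_ne j (S.g_mem_Ioo j hy))

lemma gd_le_one (S : IntervalMapSetup) (j : ℕ) {y : ℝ} (hy : y ∈ Ioo (0:ℝ) 1) :
    |S.gd j y| ≤ 1 := by
  rw [gd, abs_inv]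
  exact inv_le_one_of_one_le₀ (S.φd_ge j (S.g_mem_Ioo j hy))

lemma gd_le (S : IntervalMapSetup) {j : ℕ} (hj : 1 ≤ j) {y : ℝ} (hy : y ∈ Ioo (0:ℝ) 1) :
    |S.gd j y| ≤ S.Λ⁻¹ := by
  rw [gd, abs_inv]
  exact inv_anti₀ (by linarith [S.hΛ]) (S.hA2 j hj _ (S.g_mem j (Ioo_subset_Icc_self hy)))

lemma gd0_pos (S : IntervalMapSetup) {y : ℝ} (hy : y ∈ Ioo (0:ℝ) 1) : 0 < S.gd 0 y := by
  have hz := S.g_mem_Ioo 0 hy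
  have := S.hA4_exp _ (by have := hz.1; rwa [S.ha0] at this) hz.2.le
  exact inv_pos.2 (by linarith)

lemma T_g (S : IntervalMapSetup) (j : ℕ) {y : ℝ} (hy : y ∈ Ioo (0:ℝ) 1) : S.T (S.g j y) = y := by
  rw [S.hT_eq j _ (S.g_mem_Ioo j hy), S.φ_g j (Ioo_subset_Icc_self hy)]

lemma g_X (S : IntervalMapSetup) (j : ℕ) {y : ℝ} (hy : y ∈ S.X) : S.g j y ∈ S.X := by
  intro n
  cases n with
  | zero => exact mem_iUnion.2 ⟨j, S.g_mem_Ioo j (S.X_sub hy)⟩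
  | succ n => rw [Function.iterate_succ_apply, S.T_g j (S.X_sub hy)]; exact hy n

lemma g_T (S : IntervalMapSetup) (j : ℕ) {x : ℝ} (hx : x ∈ Ioo (S.a j) (S.a (j+1))) :
    S.g j (S.T x) = x := by
  rw [S.hT_eq j x hx, S.g_φ j (Ioo_subset_Icc_self hx)]

/-- Composite inverse branches with bounded distortion. -/
structure Branch (S : IntervalMapSetup) (D : Set ℝ) (m : ℕ) (f fd : ℝ → ℝ) (lam M : ℝ) : Prop where
  maps : ∀ y ∈ D, f y ∈ Ioo (0:ℝ) 1
  der : ∀ y ∈ D, HasDerivAt f (fd y) y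
  ne : ∀ y ∈ D, fd y ≠ 0
  le : ∀ y ∈ D, |fd y| ≤ lam
  dist : ∀ x ∈ D, ∀ y ∈ D, |Real.log (fd x) - Real.log (fd y)| ≤ M * |x - y|
  inv : ∀ y ∈ D, y ∈ S.X → f y ∈ S.X ∧ S.T^[m] (f y) = y

lemma Branch.lip {S : IntervalMapSetup} {D : Set ℝ} {m : ℕ} {f fd : ℝ → ℝ} {lam M : ℝ}
    (h : S.Branch D m f fd lam M) (hD : Convex ℝ D) {x y : ℝ} (hx : x ∈ D) (hy : y ∈ D) :
    |f x - f y| ≤ lam * |x - y| :=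
  Convex.norm_image_sub_le_of_norm_hasDerivWithin_le
    (fun z hz => (h.der z hz).hasDerivWithinAt) (fun z hz => h.le z hz) hD hy hx

lemma Branch.comp {S : IntervalMapSetup} {D E : Set ℝ} {m n : ℕ} {f fd h hd : ℝ → ℝ}
    {lam M lam' M' : ℝ} (hf : S.Branch D m f fd lam M) (hh : S.Branch E n h hd lam' M')
    (hE : Convex ℝ E) (hM : 0 ≤ M) (hmap : ∀ y ∈ E, h y ∈ D) :
    S.Branch E (n + m) (f ∘ h) (fun y => fd (h y) * hd y) (lam * lam') (M * lam' + M') where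
  maps y hy := hf.maps _ (hmap y hy)
  der y hy := (hf.der _ (hmap y hy)).comp y (hh.der y hy)
  ne y hy := mul_ne_zero (hf.ne _ (hmap y hy)) (hh.ne y hy)
  le y hy := by
    rw [abs_mul]
    exact mul_le_mul (hf.le _ (hmap y hy)) (hh.le y hy) (abs_nonneg _)
      ((abs_nonneg _).trans (hf.le _ (hmap y hy)))
  dist x hx y hy := by
    rw [Real.log_mul (hf.ne _ (hmap x hx)) (hh.ne x hx),
      Real.log_mul (hf.ne _ (hmap y hy)) (hh.ne y hy)]
    have h1 := hf.dist _ (hmap x hx) _ (hmap y hy)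
    have h2 := hh.dist x hx y hy
    have h3 := mul_le_mul_of_nonneg_left (hh.lip hE hx hy) hM
    calc _ = |(Real.log (fd (h x)) - Real.log (fd (h y))) + (Real.log (hd x) - Real.log (hd y))| := by
          congr 1; ring
      _ ≤ _ := abs_add_le _ _
      _ ≤ M * (lam' * |x - y|) + M' * |x - y| := by linarith
      _ = _ := by ring
  inv y hy hyX := by
    obtain ⟨h1, h2⟩ := hh.inv y hy hyX
    obtain ⟨h3, h4⟩ := hf.inv _ (hmap y hy) h1
    refine ⟨h3, ?_⟩
    rw [Function.iterate_add_apply, Function.comp_apply, h4, h2]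

lemma g_branch (S : IntervalMapSetup) {j : ℕ} (hj : 1 ≤ j) :
    S.Branch (Ioo 0 1) 1 (S.g j) (S.gd j) S.Λ⁻¹ S.K where
  maps y hy := S.Ioo_sub j (S.g_mem_Ioo j hy)
  der y hy := S.g_hasDerivAt j hy
  ne y hy := S.gd_ne j hy
  le y hy := S.gd_le hj hy
  dist x hx y hy := S.gd_dist j hx hy
  inv y hy hyX := ⟨S.g_X j hyX, by simpa using S.T_g j hy⟩

lemma g0_strictMono (S : IntervalMapSetup) : StrictMonoOn (S.g 0) (Ioo 0 1) := by
  refine strictMonoOn_of_deriv_pos (convex_Ioo 0 1)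
    (fun y hy => (S.g_contAt 0 hy).continuousWithinAt) (fun y hy => ?_)
  rw [interior_Ioo] at hy
  rw [(S.g_hasDerivAt 0 hy).deriv]
  exact S.gd0_pos hy

lemma g0i_mem (S : IntervalMapSetup) (k : ℕ) {y : ℝ} (hy : y ∈ Ioo (0:ℝ) 1) :
    (S.g 0)^[k] y ∈ Ioo (0:ℝ) 1 := by
  induction k with
  | zero => exact hy
  | succ k ih =>
    rw [Function.iterate_succ_apply']
    exact S.Ioo_sub 0 (S.g_mem_Ioo 0 ih)

lemma g0i_mono (S : IntervalMapSetup) (k : ℕ) {x y : ℝ} (hx : x ∈ Ioo (0:ℝ) 1)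
    (hy : y ∈ Ioo (0:ℝ) 1) (h : x ≤ y) : (S.g 0)^[k] x ≤ (S.g 0)^[k] y := by
  induction k with
  | zero => exact h
  | succ k ih =>
    rw [Function.iterate_succ_apply', Function.iterate_succ_apply']
    exact S.g0_strictMono.monotoneOn (S.g0i_mem k hx) (S.g0i_mem k hy) ih

lemma a1_pos (S : IntervalMapSetup) : 0 < S.a 1 := by
  have := S.a_lt 0; rwa [S.ha0] at this

lemma J_sub (S : IntervalMapSetup) : Ioo (S.a 1) 1 ⊆ Ioo 0 1 :=
  fun _ hx => ⟨S.a1_pos.trans hx.1, hx.2⟩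

/-- total length of the backward images of an interval in `J` -/
lemma sum_le_one (S : IntervalMapSetup) (k : ℕ) {x y : ℝ} (hx : x ∈ Ioo (S.a 1) 1)
    (hy : y ∈ Ioo (S.a 1) 1) :
    ∑ i ∈ Finset.range k, |(S.g 0)^[i] x - (S.g 0)^[i] y| ≤ 1 := by
  wlog hxy : y ≤ x generalizing x y
  · have := this hy hx (le_of_not_ge hxy)
    simpa only [abs_sub_comm] using this
  have hx' := S.J_sub hx
  have hy' := S.J_sub hy
  have h1 : ∀ i, |(S.g 0)^[i] x - (S.g 0)^[i] y| ≤ (S.g 0)^[i] x - (S.g 0)^[i+1] x := by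
    intro i
    rw [abs_of_nonneg (sub_nonneg.2 (S.g0i_mono i hy' hx' hxy))]
    have hm := S.g_mem_Ioo 0 hx'
    have := S.g0i_mono i (S.Ioo_sub 0 hm) hy' (hm.2.trans hy.1).le
    rw [Function.iterate_succ_apply]
    linarith
  calc _ ≤ ∑ i ∈ Finset.range k, ((S.g 0)^[i] x - (S.g 0)^[i+1] x) :=
        Finset.sum_le_sum fun i _ => h1 i
    _ = x - (S.g 0)^[k] x := by rw [Finset.sum_range_sub']; rfl
    _ ≤ 1 := by linarith [(S.g0i_mem k hx').1, hx'.2]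

/-- derivative of the iterates of the parabolic inverse branch -/
noncomputable def gi (S : IntervalMapSetup) (k : ℕ) (y : ℝ) : ℝ :=
  ∏ i ∈ Finset.range k, S.gd 0 ((S.g 0)^[i] y)

lemma gi_pos (S : IntervalMapSetup) (k : ℕ) {y : ℝ} (hy : y ∈ Ioo (0:ℝ) 1) : 0 < S.gi k y :=
  Finset.prod_pos fun i _ => S.gd0_pos (S.g0i_mem i hy)

lemma gi_le_one (S : IntervalMapSetup) (k : ℕ) {y : ℝ} (hy : y ∈ Ioo (0:ℝ) 1) :
    S.gi k y ≤ 1 :=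
  Finset.prod_le_one (fun i _ => (S.gd0_pos (S.g0i_mem i hy)).le)
    fun i _ => (le_abs_self _).trans (S.gd_le_one 0 (S.g0i_mem i hy))

lemma gi_der (S : IntervalMapSetup) (k : ℕ) {y : ℝ} (hy : y ∈ Ioo (0:ℝ) 1) :
    HasDerivAt ((S.g 0)^[k]) (S.gi k y) y := by
  induction k with
  | zero => simpa [gi] using hasDerivAt_id y
  | succ k ih =>
    rw [Function.iterate_succ', gi, Finset.prod_range_succ, mul_comm]
    exact (S.g_hasDerivAt 0 (S.g0i_mem k hy)).comp y ih

lemma gi_dist_sum (S : IntervalMapSetup) (k : ℕ) {x y : ℝ} (hx : x ∈ Ioo (0:ℝ) 1)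
    (hy : y ∈ Ioo (0:ℝ) 1) :
    |Real.log (S.gi k x) - Real.log (S.gi k y)| ≤
      S.K * ∑ i ∈ Finset.range k, |(S.g 0)^[i] x - (S.g 0)^[i] y| := by
  rw [gi, gi, Real.log_prod fun i _ => (S.gd_ne 0 (S.g0i_mem i hx)),
    Real.log_prod fun i _ => (S.gd_ne 0 (S.g0i_mem i hy)), ← Finset.sum_sub_distrib,
    Finset.mul_sum]
  exact (Finset.abs_sum_le_sum_abs _ _).trans
    (Finset.sum_le_sum fun i _ => S.gd_dist 0 (S.g0i_mem i hx) (S.g0i_mem i hy))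

/-- distortion constant of the parabolic branch iterates on `J` -/
noncomputable def CJ (S : IntervalMapSetup) : ℝ := S.K * (Real.exp S.K * (3 / (1 - S.a 1)))

lemma CJ_nonneg (S : IntervalMapSetup) : 0 ≤ S.CJ := by
  have := S.ha_lt 1
  have := S.hK
  have : 0 < 1 - S.a 1 := by linarith
  unfold CJ; positivity

lemma gi_dist (S : IntervalMapSetup) (k : ℕ) {x y : ℝ} (hx : x ∈ Ioo (S.a 1) 1)
    (hy : y ∈ Ioo (S.a 1) 1) :
    |Real.log (S.gi k x) - Real.log (S.gi k y)| ≤ S.CJ * |x - y| := by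
  have ha := S.ha_lt 1
  obtain ⟨p, q, hp, hq, hpq⟩ : ∃ p q, p ∈ Ioo (S.a 1) 1 ∧ q ∈ Ioo (S.a 1) 1 ∧
      q - p = (1 - S.a 1) / 3 :=
    ⟨S.a 1 + (1 - S.a 1) / 3, S.a 1 + 2 * (1 - S.a 1) / 3, ⟨by linarith, by linarith⟩,
      ⟨by linarith, by linarith⟩, by ring⟩
  have hpq0 : 0 < q - p := by rw [hpq]; linarith
  have hder : ∀ i, ∀ z ∈ Ioo (S.a 1) 1,
      S.gi i z ≤ Real.exp S.K * (|(S.g 0)^[i] q - (S.g 0)^[i] p| / (q - p)) := by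
    intro i z hz
    have hsub : Icc p q ⊆ Ioo (S.a 1) 1 := fun w hw => ⟨hp.1.trans_le hw.1, hw.2.trans_lt hq.2⟩
    obtain ⟨c, hc, h⟩ := exists_hasDerivAt_eq_slope ((S.g 0)^[i]) (S.gi i) (sub_pos.1 hpq0)
      (fun w hw => (S.gi_der i (S.J_sub (hsub hw))).continuousAt.continuousWithinAt)
      (fun w hw => S.gi_der i (S.J_sub (hsub (Ioo_subset_Icc_self hw))))
    have hc' := hsub (Ioo_subset_Icc_self hc)
    have h1 := S.gi_dist_sum i (S.J_sub hz) (S.J_sub hc')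
    have h2 := mul_le_mul_of_nonneg_left (S.sum_le_one i hz hc') S.hK.le
    have h3 : Real.log (S.gi i z) ≤ S.K + Real.log (S.gi i c) := by
      linarith [le_abs_self (Real.log (S.gi i z) - Real.log (S.gi i c))]
    calc S.gi i z = Real.exp (Real.log (S.gi i z)) := (Real.exp_log (S.gi_pos i (S.J_sub hz))).symm
      _ ≤ Real.exp (S.K + Real.log (S.gi i c)) := Real.exp_le_exp.2 h3
      _ = Real.exp S.K * S.gi i c := by
          rw [Real.exp_add, Real.exp_log (S.gi_pos i (S.J_sub hc'))]
      _ ≤ _ := by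
          refine mul_le_mul_of_nonneg_left ?_ (Real.exp_pos _).le
          rw [h]
          exact div_le_div_of_nonneg_right (le_abs_self _) hpq0.le
  have hlip : ∀ i, |(S.g 0)^[i] x - (S.g 0)^[i] y| ≤
      |(S.g 0)^[i] q - (S.g 0)^[i] p| * (Real.exp S.K * (3 / (1 - S.a 1)) * |x - y|) := by
    intro i
    have := Convex.norm_image_sub_le_of_norm_hasDerivWithin_le (s := Ioo (S.a 1) 1)
      (f := (S.g 0)^[i]) (f' := S.gi i)
      (C := Real.exp S.K * (|(S.g 0)^[i] q - (S.g 0)^[i] p| / (q - p)))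
      (fun z hz => (S.gi_der i (S.J_sub hz)).hasDerivWithinAt)
      (fun z hz => by
        rw [Real.norm_eq_abs, abs_of_pos (S.gi_pos i (S.J_sub hz))]
        exact hder i z hz) (convex_Ioo _ _) hy hx
    rw [Real.norm_eq_abs, Real.norm_eq_abs] at this
    refine this.trans (le_of_eq ?_)
    rw [hpq]
    have : 1 - S.a 1 ≠ 0 := by linarith
    field_simp
  refine (S.gi_dist_sum k (S.J_sub hx) (S.J_sub hy)).trans ?_
  rw [CJ, mul_assoc]
  refine mul_le_mul_of_nonneg_left ?_ S.hK.le
  refine (Finset.sum_le_sum fun i _ => hlip i).trans ?_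
  rw [← Finset.sum_mul]
  have h0 : 0 < 1 - S.a 1 := by linarith
  exact mul_le_of_le_one_left (by positivity) (S.sum_le_one k hq hp)

lemma gi_branch (S : IntervalMapSetup) (k : ℕ) :
    S.Branch (Ioo (S.a 1) 1) k ((S.g 0)^[k]) (S.gi k) 1 S.CJ where
  maps y hy := S.g0i_mem k (S.J_sub hy)
  der y hy := S.gi_der k (S.J_sub hy)
  ne y hy := (S.gi_pos k (S.J_sub hy)).ne'
  le y hy := by
    rw [abs_of_pos (S.gi_pos k (S.J_sub hy))]; exact S.gi_le_one k (S.J_sub hy)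
  dist x hx y hy := S.gi_dist k hx hy
  inv y _ hyX := by
    have h : (S.g 0)^[k] y ∈ S.X := by
      clear * - hyX
      induction k with
      | zero => exact hyX
      | succ k ih => rw [Function.iterate_succ_apply']; exact S.g_X 0 ih
    refine ⟨h, ?_⟩
    clear h
    induction k with
    | zero => rfl
    | succ k ih =>
      rw [Function.iterate_succ_apply, Function.iterate_succ_apply',
        S.T_g 0 (S.g0i_mem k (S.X_sub hyX)), ih]

lemma φ0_gt (S : IntervalMapSetup) {y : ℝ} (hy : 0 < y) (hy1 : y ≤ S.a 1) : y < S.φ 0 y := by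
  have h0 := S.ha0
  obtain ⟨c, hc, h⟩ := exists_hasDerivAt_eq_slope (S.φ 0) (S.φd 0) hy
    ((S.φ_cont 0).mono (by rw [h0]; exact Icc_subset_Icc le_rfl hy1))
    (fun z hz => S.φ_hasDerivAt 0 (by rw [h0]; exact ⟨hz.1, hz.2.trans_le hy1⟩))
  have h1 := S.hA4_exp c hc.1 (hc.2.le.trans hy1)
  rw [h, S.hA4_fix, sub_zero, sub_zero, one_lt_div hy] at h1
  exact h1

lemma exists_exit (S : IntervalMapSetup) {x : ℝ} (hx : x ∈ S.X) :
    ∃ k, S.T^[k] x ∉ Ioo (S.a 0) (S.a 1) := by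
  by_contra! hall
  have h0 := S.ha0
  set u : ℕ → ℝ := fun k => S.T^[k] x with hu
  have hstep : ∀ k, u (k+1) = S.φ 0 (u k) := fun k => by
    simp only [hu]
    rw [Function.iterate_succ_apply']; exact S.hT_eq 0 _ (hall k)
  have hmono : Monotone u := monotone_nat_of_le_succ fun k => by
    rw [hstep]
    exact (S.φ0_gt (by have := (hall k).1; rwa [h0] at this) (hall k).2.le).le
  have hbdd : BddAbove (range u) := ⟨S.a 1, by rintro _ ⟨k, rfl⟩; exact (hall k).2.le⟩
  have hlim := tendsto_atTop_ciSup hmono hbdd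
  set L := ⨆ i, u i
  have hL1 : L ≤ S.a 1 := le_of_tendsto' hlim fun k => (hall k).2.le
  have hL0 : 0 < L := lt_of_lt_of_le (by have := (hall 0).1; rwa [h0] at this)
    (le_ciSup hbdd 0)
  have hLm : L ∈ Icc (S.a 0) (S.a (0+1)) := ⟨by rw [h0]; exact hL0.le, hL1⟩
  have h2 : Tendsto (fun k => S.φ 0 (u k)) atTop (nhds (S.φ 0 L)) :=
    (S.φ_cont 0 L hLm).tendsto.comp (tendsto_nhdsWithin_iff.2
      ⟨hlim, Eventually.of_forall fun k => Ioo_subset_Icc_self (hall k)⟩)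
  have h3 : Tendsto (fun k => u (k+1)) atTop (nhds L) := (tendsto_add_atTop_iff_nat 1).2 hlim
  have h4 : L = S.φ 0 L := tendsto_nhds_unique h3 (by simpa only [hstep] using h2)
  exact absurd h4 (S.φ0_gt hL0 hL1).ne

/-- distortion constant of the jump transformation -/
noncomputable def Cjump (S : IntervalMapSetup) : ℝ := S.CJ * S.Λ⁻¹ + S.K

lemma Cjump_pos (S : IntervalMapSetup) : 0 < S.Cjump := by
  have := S.CJ_nonneg
  have := S.hK
  have := S.hΛ
  unfold Cjump; positivity

lemma jump (S : IntervalMapSetup) {x : ℝ} (hx : x ∈ S.X) :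
    ∃ m, 1 ≤ m ∧ ∃ h hd, S.Branch (Ioo 0 1) m h hd S.Λ⁻¹ S.Cjump ∧ h (S.T^[m] x) = x := by
  classical
  let k := Nat.find (S.exists_exit hx)
  have hk : S.T^[k] x ∉ Ioo (S.a 0) (S.a 1) := Nat.find_spec (S.exists_exit hx)
  have hlt : ∀ i < k, S.T^[i] x ∈ Ioo (S.a 0) (S.a 1) := fun i hi =>
    not_not.1 (Nat.find_min (S.exists_exit hx) hi)
  obtain ⟨j, hj⟩ := mem_iUnion.1 (hx k)
  have hj1 : 1 ≤ j := by
    rcases Nat.eq_zero_or_pos j with rfl | h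
    · exact absurd hj hk
    · exact h
  have hb := (S.gi_branch k).comp (S.g_branch hj1) (convex_Ioo 0 1) S.CJ_nonneg
    (fun y hy => by
      have := S.g_mem_Ioo j hy
      exact ⟨(S.ha_mono.monotone hj1).trans_lt this.1, this.2.trans (S.ha_lt _)⟩)
  rw [one_mul] at hb
  refine ⟨1 + k, by omega, _, _, hb, ?_⟩
  have h1 : S.g j (S.T^[1 + k] x) = S.T^[k] x := by
    rw [Function.iterate_add_apply]; exact S.g_T j hj
  rw [Function.comp_apply, h1]
  clear_value k
  clear hk hj hj1 hb h1
  induction k with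
  | zero => rfl
  | succ k ih =>
    rw [Function.iterate_succ_apply, Function.iterate_succ_apply', S.g_T 0 (hlt k (by omega))]
    exact ih fun i hi => hlt i (by omega)

/-- uniform distortion constant -/
noncomputable def M (S : IntervalMapSetup) : ℝ := S.Cjump / (1 - S.Λ⁻¹)

lemma Λinv_lt (S : IntervalMapSetup) : S.Λ⁻¹ < 1 := inv_lt_one_of_one_lt₀ S.hΛ

lemma M_nonneg (S : IntervalMapSetup) : 0 ≤ S.M :=
  div_nonneg S.Cjump_pos.le (by linarith [S.Λinv_lt])

lemma M_eq (S : IntervalMapSetup) : S.M * S.Λ⁻¹ + S.Cjump = S.M := by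
  have : 1 - S.Λ⁻¹ ≠ 0 := by linarith [S.Λinv_lt]
  have h : S.M * (1 - S.Λ⁻¹) = S.Cjump := div_mul_cancel₀ _ this
  linarith

lemma words (S : IntervalMapSetup) (n : ℕ) {x : ℝ} (hx : x ∈ S.X) :
    ∃ m, n ≤ m ∧ ∃ f fd, S.Branch (Ioo 0 1) m f fd (S.Λ⁻¹ ^ n) S.M ∧ f (S.T^[m] x) = x := by
  induction n with
  | zero =>
    refine ⟨0, le_rfl, id, fun _ => 1, ?_, rfl⟩
    exact
      { maps := fun y hy => hy
        der := fun y _ => hasDerivAt_id y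
        ne := fun _ _ => one_ne_zero
        le := by simp
        dist := fun x _ y _ => by simpa using mul_nonneg S.M_nonneg (abs_nonneg _)
        inv := fun y _ h => ⟨h, rfl⟩ }
  | succ n ih =>
    obtain ⟨m, hm, f, fd, hb, he⟩ := ih
    obtain ⟨m', hm', h, hd, hb', he'⟩ := S.jump (S.X_iter hx m)
    have hc := hb.comp hb' (convex_Ioo 0 1) S.M_nonneg (fun y hy => hb'.maps y hy)
    rw [S.M_eq, ← pow_succ] at hc
    refine ⟨m' + m, by omega, _, _, hc, ?_⟩
    rw [Function.iterate_add_apply, Function.comp_apply, he', he]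

lemma U_compl (S : IntervalMapSetup) : Icc (0:ℝ) 1 \ S.U ⊆ insert 1 (range S.a) := by
  rintro x ⟨hx, hxU⟩
  by_contra hcon
  rw [mem_insert_iff, not_or] at hcon
  obtain ⟨h1, h2⟩ := hcon
  have hx1 : x < 1 := lt_of_le_of_ne hx.2 h1
  have hex : ∃ n, x < S.a n := (S.ha_lim.eventually (lt_mem_nhds hx1)).exists
  classical
  let n := Nat.find hex
  have hn : x < S.a n := Nat.find_spec hex
  have hmin : ∀ i < n, ¬ x < S.a i := fun i hi => Nat.find_min hex hi
  clear_value n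
  cases n with
  | zero => rw [S.ha0] at hn; linarith [hx.1]
  | succ n =>
    refine hxU (mem_iUnion.2 ⟨n, lt_of_le_of_ne (not_lt.1 (hmin n (by omega))) ?_, hn⟩)
    intro h; exact h2 ⟨n, h⟩

lemma X_compl_countable (S : IntervalMapSetup) : (Icc (0:ℝ) 1 \ S.X).Countable := by
  have hU : (Icc (0:ℝ) 1 \ S.U).Countable :=
    ((countable_range S.a).insert 1).mono S.U_compl
  have hpre : ∀ n, {x ∈ Icc (0:ℝ) 1 | S.T^[n] x ∈ Icc (0:ℝ) 1 \ S.U}.Countable := by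
    intro n
    induction n with
    | zero => exact hU.mono fun x hx => hx.2
    | succ n ih =>
      refine (hU.union (countable_iUnion fun j => ih.image (S.g j))).mono ?_
      rintro x ⟨hx, hx2⟩
      by_cases hxU : x ∈ S.U
      · right
        obtain ⟨j, hj⟩ := mem_iUnion.1 hxU
        refine mem_iUnion.2 ⟨j, S.T x, ⟨S.hT_maps hx, ?_⟩, S.g_T j hj⟩
        rwa [Function.iterate_succ_apply] at hx2
      · exact Or.inl ⟨hx, hxU⟩
  refine (countable_iUnion hpre).mono ?_
  rintro x ⟨hx, hxX⟩
  simp only [X, mem_setOf_eq, not_forall] at hxX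
  obtain ⟨n, hn⟩ := hxX
  exact mem_iUnion.2 ⟨n, hx, S.hT_maps.iterate n hx, hn⟩

lemma X_meas (S : IntervalMapSetup) : MeasurableSet S.X := by
  have : S.X = Icc (0:ℝ) 1 \ (Icc (0:ℝ) 1 \ S.X) := by
    rw [diff_diff_cancel_left (S.X_sub.trans Ioo_subset_Icc_self)]
  rw [this]
  exact measurableSet_Icc.diff S.X_compl_countable.measurableSet

lemma T_meas (S : IntervalMapSetup) {A : Set ℝ} (hA : MeasurableSet A) :
    MeasurableSet {x | x ∈ S.X ∧ S.T x ∈ A} := by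
  have : {x | x ∈ S.X ∧ S.T x ∈ A} =
      S.X ∩ ⋃ j, (Ioo (S.a j) (S.a (j+1)) ∩ S.φ j ⁻¹' A) := by
    ext x
    simp only [mem_setOf_eq, mem_inter_iff, mem_iUnion, mem_preimage]
    refine and_congr_right fun hx => ⟨fun h => ?_, ?_⟩
    · obtain ⟨j, hj⟩ := mem_iUnion.1 (S.X_sub_U hx)
      exact ⟨j, hj, by rwa [← S.hT_eq j x hj]⟩
    · rintro ⟨j, hj, h⟩
      rwa [S.hT_eq j x hj]
  rw [this]
  refine S.X_meas.inter (MeasurableSet.iUnion fun j => ?_)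
  have hc : ContinuousOn (S.φ j) (Ioo (S.a j) (S.a (j+1))) :=
    (S.φ_cont j).mono Ioo_subset_Icc_self
  have hm : Measurable ((Ioo (S.a j) (S.a (j+1))).restrict (S.φ j)) :=
    (continuousOn_iff_continuous_restrict.1 hc).measurable
  have := (MeasurableEmbedding.subtype_coe (measurableSet_Ioo (a := S.a j) (b := S.a (j+1)))).measurableSet_image.2 (hm hA)
  convert this using 1
  ext x
  constructor
  · rintro ⟨h1, h2⟩
    exact ⟨⟨x, h1⟩, h2, rfl⟩
  · rintro ⟨⟨z, hz⟩, h2, rfl⟩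
    exact ⟨hz, h2⟩

lemma Tn_meas (S : IntervalMapSetup) {A : Set ℝ} (hA : MeasurableSet A) (n : ℕ) :
    MeasurableSet {x | x ∈ S.X ∧ S.T^[n] x ∈ A} := by
  induction n with
  | zero => exact S.X_meas.inter hA
  | succ n ih =>
    convert S.T_meas ih using 1
    ext x
    simp only [mem_setOf_eq, Function.iterate_succ_apply]
    exact and_congr_right fun hx => (and_iff_right (S.X_T hx)).symm

lemma null_of_wandering (S : IntervalMapSetup) {B : Set ℝ} (hB : MeasurableSet B)
    (hBX : B ⊆ S.X) (N : ℕ) (hw : ∀ m, N ≤ m → ∀ x ∈ B, S.T^[m] x ∉ B) : volume B = 0 := by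
  by_contra hne
  have hdens := Besicovitch.ae_tendsto_measure_inter_div_of_measurableSet (volume : Measure ℝ) hB
  obtain ⟨x, hxB, hx⟩ : ∃ x ∈ B, Tendsto (fun r => volume (B ∩ Metric.closedBall x r) /
      volume (Metric.closedBall x r)) (nhdsWithin 0 (Ioi 0)) (nhds (B.indicator 1 x)) := by
    by_contra! hcon
    exact hne (measure_mono_null (fun y hy => hcon y hy) hdens)
  rw [indicator_of_mem hxB, Pi.one_apply] at hx
  have hhalf : (1/2 : ℝ) ∈ Ioo (0:ℝ) 1 := by norm_num
  choose m hm f fd hb he using fun n => S.words n (hBX hxB)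
  let s : ℕ → ℝ := fun n => Real.exp S.M * |fd n (1/2)|
  have hspos : ∀ n, 0 < s n := fun n =>
    mul_pos (Real.exp_pos _) (abs_pos.2 ((hb n).ne _ hhalf))
  have hs0 : Tendsto s atTop (nhds 0) := by
    have h1 : Tendsto (fun n : ℕ => Real.exp S.M * S.Λ⁻¹ ^ n) atTop (nhds 0) := by
      have := (tendsto_pow_atTop_nhds_zero_of_lt_one
        (inv_nonneg.2 (by linarith [S.hΛ])) S.Λinv_lt).const_mul (Real.exp S.M)
      simpa using this
    exact squeeze_zero (fun n => (hspos n).le)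
      (fun n => mul_le_mul_of_nonneg_left ((hb n).le _ hhalf) (Real.exp_pos _).le) h1
  have hlog : ∀ n, ∀ y ∈ Ioo (0:ℝ) 1, ∀ z ∈ Ioo (0:ℝ) 1, |fd n y| ≤ Real.exp S.M * |fd n z| := by
    intro n y hy z hz
    have h1 := (hb n).dist y hy z hz
    have h2 : |y - z| ≤ 1 := abs_le.2 ⟨by linarith [hy.1, hz.2], by linarith [hy.2, hz.1]⟩
    have h3 := mul_le_mul_of_nonneg_left h2 S.M_nonneg
    have h4 : Real.log |fd n y| ≤ S.M + Real.log |fd n z| := by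
      rw [Real.log_abs, Real.log_abs]
      linarith [le_abs_self (Real.log (fd n y) - Real.log (fd n z))]
    rw [← Real.exp_log (abs_pos.2 ((hb n).ne y hy)),
      ← Real.exp_log (abs_pos.2 ((hb n).ne z hz)), ← Real.exp_add]
    exact Real.exp_le_exp.2 h4
  have hup : ∀ n, ∀ y ∈ Ioo (0:ℝ) 1, |fd n y| ≤ s n := fun n y hy => hlog n y hy _ hhalf
  have hlow : ∀ n, ∀ y ∈ Ioo (0:ℝ) 1, Real.exp (-(2 * S.M)) * s n ≤ |fd n y| := by
    intro n y hy
    have h1 := hlog n _ hhalf y hy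
    have : Real.exp (-(2 * S.M)) * s n = Real.exp (-S.M) * |fd n (1/2)| := by
      simp only [s]
      rw [← mul_assoc, ← Real.exp_add]; congr 2; ring
    rw [this]
    calc _ ≤ Real.exp (-S.M) * (Real.exp S.M * |fd n y|) :=
          mul_le_mul_of_nonneg_left h1 (Real.exp_pos _).le
      _ = |fd n y| := by rw [← mul_assoc, ← Real.exp_add]; simp
  have hBI : B ⊆ Ioo 0 1 := hBX.trans S.X_sub
  set κ : ENNReal := ENNReal.ofReal (Real.exp (-(2 * S.M)) / 2) * volume B with hκ
  have hκ0 : κ ≠ 0 := mul_ne_zero (by simpa using by positivity) hne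
  have key : ∀ n, N ≤ n → volume (B ∩ Metric.closedBall x (s n)) /
      volume (Metric.closedBall x (s n)) + κ ≤ 1 := by
    intro n hn
    have hinj : InjOn (f n) B := by
      intro y hy z hz h
      have h1 := ((hb n).inv y (hBI hy) (hBX hy)).2
      have h2 := ((hb n).inv z (hBI hz) (hBX hz)).2
      rw [← h1, ← h2, h]
    have hder : ∀ y ∈ B, HasDerivWithinAt (f n) (fd n y) B y := fun y hy =>
      ((hb n).der y (hBI hy)).hasDerivWithinAt
    have hvol : volume (f n '' B) = ∫⁻ y in B, ENNReal.ofReal |fd n y| := by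
      have := lintegral_image_eq_lintegral_abs_deriv_mul hB hder hinj (fun _ => 1)
      simpa using this
    have hge : ENNReal.ofReal (Real.exp (-(2 * S.M)) * s n) * volume B ≤ volume (f n '' B) := by
      rw [hvol, ← setLIntegral_const]
      exact setLIntegral_mono' hB fun y hy => ENNReal.ofReal_le_ofReal (hlow n y (hBI hy))
    have hmeas : MeasurableSet (f n '' B) :=
      measurable_image_of_fderivWithin hB (fun y hy => (hder y hy).hasFDerivWithinAt) hinj
    have hsub : f n '' B ⊆ Metric.closedBall x (s n) := by
      rintro _ ⟨y, hy, rfl⟩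
      rw [Metric.mem_closedBall, Real.dist_eq]
      have hz : S.T^[m n] x ∈ Ioo (0:ℝ) 1 := S.X_sub (S.X_iter (hBX hxB) _)
      have h1 := Convex.norm_image_sub_le_of_norm_hasDerivWithin_le (s := Ioo (0:ℝ) 1)
        (fun z hz => ((hb n).der z hz).hasDerivWithinAt) (fun z hz => hup n z hz)
        (convex_Ioo 0 1) hz (hBI hy)
      rw [he, Real.norm_eq_abs, Real.norm_eq_abs] at h1
      have h2 : |y - S.T^[m n] x| ≤ 1 :=
        abs_le.2 ⟨by linarith [(hBI hy).1, hz.2], by linarith [(hBI hy).2, hz.1]⟩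
      exact h1.trans (mul_le_of_le_one_right (hspos n).le h2)
    have hdisj : Disjoint (B ∩ Metric.closedBall x (s n)) (f n '' B) := by
      rw [Set.disjoint_left]
      rintro _ ⟨hB1, _⟩ ⟨y, hy, rfl⟩
      refine hw (m n) (hn.trans (hm n)) _ hB1 ?_
      rw [((hb n).inv y (hBI hy) (hBX hy)).2]; exact hy
    have hsum : volume (B ∩ Metric.closedBall x (s n)) + volume (f n '' B) ≤
        volume (Metric.closedBall x (s n)) := by
      rw [← measure_union hdisj hmeas]
      exact measure_mono (union_subset inter_subset_right hsub)
    have hball : volume (Metric.closedBall x (s n)) = ENNReal.ofReal (2 * s n) :=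
      Real.volume_closedBall x (s n)
    have hb0 : volume (Metric.closedBall x (s n)) ≠ 0 := by
      rw [hball]; simpa using hspos n
    have hbt : volume (Metric.closedBall x (s n)) ≠ ⊤ := by rw [hball]; exact ENNReal.ofReal_ne_top
    have hκle : κ ≤ volume (f n '' B) / volume (Metric.closedBall x (s n)) := by
      rw [ENNReal.le_div_iff_mul_le (Or.inl hb0) (Or.inl hbt), hball]
      refine le_trans (le_of_eq ?_) hge
      rw [hκ, mul_right_comm, ← ENNReal.ofReal_mul (by positivity)]
      congr 2; ring
    calc _ ≤ volume (B ∩ Metric.closedBall x (s n)) / volume (Metric.closedBall x (s n)) +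
          volume (f n '' B) / volume (Metric.closedBall x (s n)) := by gcongr
      _ = (volume (B ∩ Metric.closedBall x (s n)) + volume (f n '' B)) /
          volume (Metric.closedBall x (s n)) := by rw [ENNReal.add_div]
      _ ≤ 1 := ENNReal.div_le_of_le_mul (by rw [one_mul]; exact hsum)
  have hlim := (hx.comp (tendsto_nhdsWithin_iff.2
    ⟨hs0, Eventually.of_forall fun n => hspos n⟩)).add_const κ
  have hle : 1 + κ ≤ 1 := le_of_tendsto hlim (by
    filter_upwards [eventually_ge_atTop N] with n hn
    exact key n hn)
  have h5 : (1 : ENNReal) + κ ≤ 1 + 0 := by simpa using hle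
  have := (ENNReal.add_le_add_iff_left ENNReal.one_ne_top).1 h5
  exact hκ0 (le_antisymm this bot_le)

end IntervalMapSetup

/-- a Markov interval map satisfying (A1)–(A4) is conservative w.r.t.
Lebesgue measure: for every Borel `A ⊆ [0,1]` of positive measure, almost every
point of `A` returns to `A` infinitely often. -/
theorem conservative_of_intervalMapSetup (S : IntervalMapSetup) :
    ∀ A : Set ℝ, A ⊆ Set.Icc 0 1 → MeasurableSet A → 0 < volume A →
      volume {x ∈ A | ¬ ∀ N : ℕ, ∃ n : ℕ, N ≤ n ∧ S.T^[n + 1] x ∈ A} = 0 := by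
  intro A hA hAm _
  have hB : ∀ N : ℕ, volume {x | (x ∈ A ∧ x ∈ S.X) ∧ ∀ n, N ≤ n → S.T^[n+1] x ∉ A} = 0 := by
    intro N
    refine S.null_of_wandering ?_ (fun x hx => hx.1.2) (N+1) ?_
    · have : {x | (x ∈ A ∧ x ∈ S.X) ∧ ∀ n, N ≤ n → S.T^[n+1] x ∉ A} =
          (A ∩ S.X) \ ⋃ n, ⋃ (_ : N ≤ n), {x | x ∈ S.X ∧ S.T^[n+1] x ∈ A} := by
        ext x
        simp only [mem_setOf_eq, mem_diff, mem_inter_iff, mem_iUnion, not_exists, not_and]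
        exact and_congr_right fun h => ⟨fun h1 n hn _ => h1 n hn, fun h1 n hn => h1 n hn h.2⟩
      rw [this]
      exact (hAm.inter S.X_meas).diff (MeasurableSet.iUnion fun n =>
        MeasurableSet.iUnion fun _ => S.Tn_meas hAm (n+1))
    · rintro m hm x hx hx'
      obtain ⟨n, rfl⟩ : ∃ n, m = n + 1 := ⟨m - 1, by omega⟩
      exact hx.2 n (by omega) hx'.1.1
  refine measure_mono_null (t := (Icc (0:ℝ) 1 \ S.X) ∪
    ⋃ N : ℕ, {x | (x ∈ A ∧ x ∈ S.X) ∧ ∀ n, N ≤ n → S.T^[n+1] x ∉ A}) ?_ ?_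
  · rintro x ⟨hxA, hx⟩
    by_cases hX : x ∈ S.X
    · right
      push Not at hx
      obtain ⟨N, hN⟩ := hx
      exact mem_iUnion.2 ⟨N, ⟨hxA, hX⟩, hN⟩
    · exact Or.inl ⟨hA hxA, hX⟩
  · exact measure_union_null (S.X_compl_countable.measure_zero _) (measure_iUnion_null hB)
end

section
/- (Miernowski–Nogueira criterion) Let (X, 𝒜, ν, T) be a non-singular and ergodic dynamical system on a σ-finite measure space. Then T is exact if and only if for every A ∈ 𝒜 with ν(A) > 0 there exists n = n(A) ∈ ℕ such that ν(T^{n+1}A ∩ T^n A) > 0. -/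
open MeasureTheory Set Filter

/-- `A` belongs to the tail σ-algebra `𝒯 = ⋂ₙ T⁻ⁿ 𝒜`: for every `n`, `A` is the
`n`-fold preimage of some measurable set. -/
def IsTailSet {X : Type*} [MeasurableSpace X] (T : X → X) (A : Set X) : Prop :=
  ∀ n : ℕ, ∃ B : Set X, MeasurableSet B ∧ A = T^[n] ⁻¹' B

/-- `A` belongs to the invariant σ-algebra `ℐ`: `A` is measurable and
`T⁻¹ A = A` mod `ν`. -/
def IsInvModNu {X : Type*} [MeasurableSpace X] (ν : Measure X) (T : X → X)
    (A : Set X) : Prop :=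
  MeasurableSet A ∧ ν (symmDiff (T ⁻¹' A) A) = 0

/-- The iterated preimage-of-image union is a tail set. -/
theorem isTailSet_iUnion_aux {X : Type*} [MeasurableSpace X] (T : X → X)
    (hTmeas : Measurable T) (C : ℕ → Set X) (hC : ∀ n, MeasurableSet (C n))
    (hmono : Monotone fun n => T^[n] ⁻¹' C n) :
    IsTailSet T (⋃ n, T^[n] ⁻¹' C n) := by
  intro k
  refine ⟨⋃ n, T^[n] ⁻¹' C (n + k),
    MeasurableSet.iUnion fun n => (hTmeas.iterate n) (hC _), ?_⟩
  ext x
  simp only [mem_iUnion, mem_preimage]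
  constructor
  · rintro ⟨n, hn⟩
    refine ⟨n, ?_⟩
    have := hmono (Nat.le_add_right n k) hn
    simpa [mem_preimage, Function.iterate_add_apply] using this
  · rintro ⟨n, hn⟩
    refine ⟨n + k, ?_⟩
    rwa [Function.iterate_add_apply]

/-- Miernowski–Nogueira criterion: a non-singular ergodic dynamical
system `(X, 𝒜, ν, T)` on a σ-finite measure space is exact iff every measurable set
of positive measure is asymptotically intersecting. -/
theorem exact_iff_asymptotically_intersecting
    {X : Type*} [MeasurableSpace X] (ν : Measure X) [SigmaFinite ν] (T : X → X)
    (hTmeas : Measurable T)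
    (hTimg : ∀ A : Set X, MeasurableSet A → MeasurableSet (T '' A))
    (hTsurj : Function.Surjective T)
    (hns : ∀ A : Set X, MeasurableSet A → ν A = 0 → ν (T ⁻¹' A) = 0)
    (herg : ∀ A : Set X, IsInvModNu ν T A → ν A = 0 ∨ ν Aᶜ = 0) :
    (∀ A : Set X, IsTailSet T A → ν A = 0 ∨ ν Aᶜ = 0) ↔
      (∀ A : Set X, MeasurableSet A → 0 < ν A →
        ∃ n : ℕ, 0 < ν (T^[n + 1] '' A ∩ T^[n] '' A)) := by
  have himg : ∀ (n : ℕ) (A : Set X), MeasurableSet A → MeasurableSet (T^[n] '' A) := by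
    intro n
    induction n with
    | zero => intro A hA; simpa using hA
    | succ n ih =>
      intro A hA
      rw [Function.iterate_succ, image_comp]
      exact ih _ (hTimg _ hA)
  have hpre : ∀ (n : ℕ) (A : Set X), MeasurableSet A → ν A = 0 → ν (T^[n] ⁻¹' A) = 0 := by
    intro n
    induction n with
    | zero => intro A _ h; simpa using h
    | succ n ih =>
      intro A hA h
      rw [Function.iterate_succ', preimage_comp]
      exact ih _ (hTmeas hA) (hns A hA h)
  constructor
  · intro hex A hA hpos
    by_contra hcon
    push Not at hcon
    have hfull : ∀ D : Set X, MeasurableSet D → 0 < ν D →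
        ν (⋃ n, T^[n] ⁻¹' (T^[n] '' D))ᶜ = 0 := by
      intro D hD hDpos
      refine (hex _ (isTailSet_iUnion_aux T hTmeas _ (fun n => himg n D hD) ?_)).resolve_left ?_
      · refine monotone_nat_of_le_succ fun n => ?_
        rintro x ⟨d, hd, hdx⟩
        refine ⟨d, hd, ?_⟩
        rw [Function.iterate_succ_apply', Function.iterate_succ_apply', hdx]
      · intro h0
        refine hDpos.ne' (measure_mono_null ?_ h0)
        intro x hx
        exact mem_iUnion.2 ⟨0, by simpa using hx⟩
    have hTpos : 0 < ν (T '' A) := by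
      refine pos_iff_ne_zero.2 fun h => hpos.ne' ?_
      exact measure_mono_null (subset_preimage_image T A) (hns _ (hTimg A hA) h)
    have h1 := hfull A hA hpos
    have h2 := hfull _ (hTimg A hA) hTpos
    have h3 : ν (⋃ n, T^[n] ⁻¹' (T^[n + 1] '' A ∩ T^[n] '' A)) = 0 :=
      measure_iUnion_null fun n => hpre n _ ((himg _ A hA).inter (himg _ A hA))
        (le_antisymm (hcon n) (zero_le))
    refine hpos.ne' (measure_mono_null (subset_univ A)
      (measure_mono_null ?_ (measure_union_null (measure_union_null h1 h2) h3)))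
    intro x _
    by_cases hx1 : x ∈ ⋃ n, T^[n] ⁻¹' (T^[n] '' A)
    swap
    · exact Or.inl (Or.inl hx1)
    by_cases hx2 : x ∈ ⋃ n, T^[n] ⁻¹' (T^[n] '' (T '' A))
    swap
    · exact Or.inl (Or.inr hx2)
    right
    obtain ⟨n, a, ha, hax⟩ := mem_iUnion.1 hx1
    obtain ⟨m, _, ⟨b, hb, rfl⟩, hbx⟩ := mem_iUnion.1 hx2
    refine mem_iUnion.2 ⟨m + n, ⟨b, hb, ?_⟩, ⟨a, ha, ?_⟩⟩
    · rw [Function.iterate_succ_apply, add_comm m n, Function.iterate_add_apply, hbx,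
        Function.iterate_add_apply]
    · rw [Function.iterate_add_apply, hax, Function.iterate_add_apply]
  · intro hInter A hA
    have hAm : MeasurableSet A := by
      obtain ⟨B, hB, h⟩ := hA 0
      rw [h]
      simpa using hB
    have key : ∀ C : Set X, IsTailSet T C → (∀ x ∈ C, T x ∉ C) → ν C = 0 := by
      intro C hC hdisj
      by_contra hne
      have hCm : MeasurableSet C := by
        obtain ⟨B, hB, h⟩ := hC 0
        rw [h]
        simpa using hB
      obtain ⟨n, hn⟩ := hInter C hCm (pos_iff_ne_zero.2 hne)
      obtain ⟨y, ⟨c, hc, hcy⟩, ⟨d, hd, hdy⟩⟩ := nonempty_of_measure_ne_zero hn.ne'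
      obtain ⟨B, hB, h⟩ := hC n
      refine hdisj c hc ?_
      rw [h] at hd ⊢
      rw [mem_preimage] at hd ⊢
      rw [← Function.iterate_succ_apply, hcy, ← hdy]
      exact hd
    refine herg A ⟨hAm, ?_⟩
    rw [Set.symmDiff_def]
    refine measure_union_null (key _ ?_ ?_) (key _ ?_ ?_)
    · intro n
      obtain ⟨B, hB, h⟩ := hA n
      refine ⟨T ⁻¹' B \ B, (hTmeas hB).diff hB, ?_⟩
      rw [h, preimage_sdiff, ← preimage_comp, ← preimage_comp, ← Function.iterate_succ,
        Function.iterate_succ']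
    · rintro x ⟨hx, _⟩ ⟨_, hx'⟩
      exact hx' hx
    · intro n
      obtain ⟨B, hB, h⟩ := hA n
      refine ⟨B \ T ⁻¹' B, hB.diff (hTmeas hB), ?_⟩
      rw [h, preimage_sdiff, ← preimage_comp, ← preimage_comp, ← Function.iterate_succ,
        Function.iterate_succ']
    · rintro x ⟨_, hx⟩ ⟨hx', _⟩
      exact hx hx'
end

section
/- Let (X, 𝒜, ν, T) be a non-singular dynamical system on a σ-finite measure space, with invariant σ-algebra ℐ and tail σ-algebra 𝒯. If every A ∈ 𝒯 with ν(A) > 0 is asymptotically intersecting, then ℐ = 𝒯 (mod ν). -/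
open MeasureTheory Set Filter

/-- if every tail set of positive measure is asymptotically intersecting,
then the invariant and tail σ-algebras coincide mod `ν`: every tail set is invariant
mod `ν`, and every invariant (mod `ν`) set agrees mod `ν` with a tail set. -/
theorem inv_eq_tail_of_tail_asymptotically_intersecting
    {X : Type*} [MeasurableSpace X] (ν : Measure X) [SigmaFinite ν] (T : X → X)
    (hTmeas : Measurable T)
    (hTimg : ∀ A : Set X, MeasurableSet A → MeasurableSet (T '' A))
    (hTsurj : Function.Surjective T)
    (hns : ∀ A : Set X, MeasurableSet A → ν A = 0 → ν (T ⁻¹' A) = 0)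
    (hai : ∀ A : Set X, IsTailSet T A → 0 < ν A →
      ∃ n : ℕ, 0 < ν (T^[n + 1] '' A ∩ T^[n] '' A)) :
    (∀ A : Set X, IsTailSet T A → ν (symmDiff (T ⁻¹' A) A) = 0) ∧
      (∀ A : Set X, IsInvModNu ν T A →
        ∃ B : Set X, IsTailSet T B ∧ ν (symmDiff A B) = 0) := by
  have key : ∀ A : Set X, IsTailSet T A → ∀ n x y, T^[n] x = T^[n] y → (x ∈ A ↔ y ∈ A) := by
    intro A hA n x y hxy
    obtain ⟨B, -, rfl⟩ := hA n
    simp only [mem_preimage, hxy]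
  have hpre : ∀ A : Set X, IsTailSet T A → IsTailSet T (T ⁻¹' A) := by
    intro A hA n
    obtain ⟨B, hB, h⟩ := hA n
    refine ⟨T ⁻¹' B, hTmeas hB, ?_⟩
    rw [h, ← preimage_comp, ← preimage_comp, ← Function.iterate_succ, ← Function.iterate_succ']
  have hdiff : ∀ A B : Set X, IsTailSet T A → IsTailSet T B → IsTailSet T (A \ B) := by
    intro A B hA hB n
    obtain ⟨A', hA', h⟩ := hA n
    obtain ⟨B', hB', h'⟩ := hB n
    exact ⟨A' \ B', hA'.diff hB', by rw [h, h', preimage_diff]⟩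
  have hzero : ∀ A : Set X, IsTailSet T A →
      (∀ n : ℕ, T^[n + 1] '' A ∩ T^[n] '' A = ∅) → ν A = 0 := by
    intro A hA h
    by_contra h0
    obtain ⟨n, hn⟩ := hai A hA (pos_iff_ne_zero.mpr h0)
    rw [h n, measure_empty] at hn
    exact lt_irrefl _ hn
  refine ⟨fun A hA => ?_, fun A hA => ?_⟩
  · rw [Set.symmDiff_def]
    refine measure_union_null (hzero _ (hdiff _ _ (hpre A hA) hA) fun n => ?_)
      (hzero _ (hdiff _ _ hA (hpre A hA)) fun n => ?_)
    · rw [eq_empty_iff_forall_notMem]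
      rintro _ ⟨⟨c, hc, rfl⟩, ⟨b, hb, hbc⟩⟩
      rw [Function.iterate_succ_apply] at hbc
      exact hb.2 ((key A hA n _ _ hbc).2 hc.1)
    · rw [eq_empty_iff_forall_notMem]
      rintro _ ⟨⟨c, hc, rfl⟩, ⟨b, hb, hbc⟩⟩
      rw [Function.iterate_succ_apply] at hbc
      exact hc.2 ((key A hA n _ _ hbc).1 hb.1)
  · have hq : Measure.QuasiMeasurePreserving T ν ν :=
      ⟨hTmeas, Measure.AbsolutelyContinuous.mk fun s hs h0 => by
        rw [Measure.map_apply hTmeas hs]; exact hns s hs h0⟩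
    obtain ⟨B, hB, hBA, hinv⟩ := hq.exists_preimage_eq_of_preimage_ae hA.1.nullMeasurableSet
      (measure_symmDiff_eq_zero_iff.mp hA.2)
    refine ⟨B, fun n => ⟨B, hB, ?_⟩, measure_symmDiff_eq_zero_iff.mpr hBA.symm⟩
    induction n with
    | zero => rfl
    | succ n ih => rw [Function.iterate_succ, preimage_comp, ← ih, hinv]
end

section
/- Let (X, 𝒜, ν, T) be a non-singular dynamical system on a σ-finite measure space, with invariant σ-algebra ℐ and tail σ-algebra 𝒯. If ℐ = 𝒯 (mod ν), then every A ∈ 𝒜 with ν(A) > 0 is asymptotically intersecting. -/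
open MeasureTheory Set Filter

/-- if the invariant and tail σ-algebras coincide mod `ν`, then every
measurable set of positive measure is asymptotically intersecting. -/
theorem asymptotically_intersecting_of_inv_eq_tail
    {X : Type*} [MeasurableSpace X] (ν : Measure X) [SigmaFinite ν] (T : X → X)
    (hTmeas : Measurable T)
    (hTimg : ∀ A : Set X, MeasurableSet A → MeasurableSet (T '' A))
    (hTsurj : Function.Surjective T)
    (hns : ∀ A : Set X, MeasurableSet A → ν A = 0 → ν (T ⁻¹' A) = 0)
    (heq₁ : ∀ A : Set X, IsTailSet T A → ν (symmDiff (T ⁻¹' A) A) = 0)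
    (heq₂ : ∀ A : Set X, IsInvModNu ν T A →
      ∃ B : Set X, IsTailSet T B ∧ ν (symmDiff A B) = 0) :
    ∀ A : Set X, MeasurableSet A → 0 < ν A →
      ∃ n : ℕ, 0 < ν (T^[n + 1] '' A ∩ T^[n] '' A) := by
  intro A hA hpos
  by_contra hcon
  have hz : ∀ n : ℕ, ν (T^[n + 1] '' A ∩ T^[n] '' A) = 0 := by
    intro n
    by_contra h
    exact hcon ⟨n, pos_iff_ne_zero.mpr h⟩
  have himg : ∀ n : ℕ, MeasurableSet (T^[n] '' A) := by
    intro n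
    induction n with
    | zero => simpa using hA
    | succ k ih =>
      rw [Function.iterate_succ', Set.image_comp]
      exact hTimg _ ih
  have hnsn : ∀ n : ℕ, ∀ C : Set X, MeasurableSet C → ν C = 0 → ν (T^[n] ⁻¹' C) = 0 := by
    intro n
    induction n with
    | zero => intro C _ h; simpa using h
    | succ k ih =>
      intro C hC h
      rw [Function.iterate_succ', Set.preimage_comp]
      exact ih _ (hTmeas hC) (hns C hC h)
  have htail : IsTailSet T (⋃ n : ℕ, T^[n] ⁻¹' (T^[n] '' A)) := by
    intro m
    refine ⟨⋃ k : ℕ, T^[k] ⁻¹' (T^[k + m] '' A),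
      MeasurableSet.iUnion fun k => (hTmeas.iterate k) (himg _), ?_⟩
    ext x
    simp only [Set.mem_iUnion, Set.mem_preimage, Set.mem_image]
    constructor
    · rintro ⟨n, a, ha, h⟩
      refine ⟨n, a, ha, ?_⟩
      rw [← Function.iterate_add_apply, Nat.add_comm n m, Function.iterate_add_apply,
        Function.iterate_add_apply, h]
    · rintro ⟨k, a, ha, h⟩
      exact ⟨k + m, a, ha, by rw [h, Function.iterate_add_apply]⟩
  have h1 := heq₁ _ htail
  have hsub : A ⊆ symmDiff (T ⁻¹' (⋃ n : ℕ, T^[n] ⁻¹' (T^[n] '' A)))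
      (⋃ n : ℕ, T^[n] ⁻¹' (T^[n] '' A)) ∪
      ⋃ n : ℕ, T^[n + 1] ⁻¹' (T^[n + 1] '' A ∩ T^[n] '' A) := by
    intro x hx
    by_cases hxT : x ∈ T ⁻¹' (⋃ n : ℕ, T^[n] ⁻¹' (T^[n] '' A))
    · right
      simp only [Set.mem_preimage, Set.mem_iUnion] at hxT
      obtain ⟨n, hn⟩ := hxT
      refine Set.mem_iUnion.mpr ⟨n, Set.mem_image_of_mem _ hx, ?_⟩
      rw [Function.iterate_succ_apply]
      exact hn
    · left
      refine Or.inr ⟨?_, hxT⟩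
      exact Set.mem_iUnion.mpr ⟨0, Set.mem_image_of_mem _ hx⟩
  have h0 : ν A = 0 := measure_mono_null hsub (measure_union_null h1
    (measure_iUnion_null fun n => hnsn _ _ ((himg _).inter (himg _)) (hz n)))
  exact hpos.ne' h0
end

section
/- Let (X, 𝒜, ν, T) be a non-singular dynamical system on a σ-finite measure space. If every set in the tail σ-algebra 𝒯 of positive ν-measure is asymptotically intersecting, then every A ∈ 𝒜 with ν(A) > 0 is asymptotically intersecting. -/
open MeasureTheory Set Filter

/-- if every tail set of positive measure is asymptotically intersecting,
then so is every measurable set of positive measure. -/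
theorem asymptotically_intersecting_of_tail_asymptotically_intersecting
    {X : Type*} [MeasurableSpace X] (ν : Measure X) [SigmaFinite ν] (T : X → X)
    (hTmeas : Measurable T)
    (hTimg : ∀ A : Set X, MeasurableSet A → MeasurableSet (T '' A))
    (hTsurj : Function.Surjective T)
    (hns : ∀ A : Set X, MeasurableSet A → ν A = 0 → ν (T ⁻¹' A) = 0)
    (hai : ∀ A : Set X, IsTailSet T A → 0 < ν A →
      ∃ n : ℕ, 0 < ν (T^[n + 1] '' A ∩ T^[n] '' A)) :
    ∀ A : Set X, MeasurableSet A → 0 < ν A →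
      ∃ n : ℕ, 0 < ν (T^[n + 1] '' A ∩ T^[n] '' A) := by
  intro A hA hpos
  by_contra! hcon
  have hnull : ∀ n, ν (T^[n + 1] '' A ∩ T^[n] '' A) = 0 := fun n => le_antisymm (hcon n) bot_le
  have himg : ∀ n, MeasurableSet (T^[n] '' A) := by
    intro n
    induction n with
    | zero => simpa using hA
    | succ k ih =>
      rw [Function.iterate_succ', image_comp]
      exact hTimg _ ih
  have hpre : ∀ m (S : Set X), MeasurableSet S → ν S = 0 → ν (T^[m] ⁻¹' S) = 0 := by
    intro m
    induction m with
    | zero => intro S _ h; simpa using h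
    | succ k ih =>
      intro S hS h
      rw [Function.iterate_succ', preimage_comp]
      exact ih _ (hTmeas hS) (hns S hS h)
  -- membership in the sets `T⁻ᵐ Tᵐ⁺ⁿ A` is monotone in `m`
  have hmono : ∀ n m k x, T^[m] x ∈ T^[m + n] '' A → T^[m + k] x ∈ T^[m + k + n] '' A := by
    rintro n m k x ⟨a, ha, h⟩
    refine ⟨a, ha, ?_⟩
    rw [show m + k + n = k + (m + n) by omega, Function.iterate_add_apply, h,
      ← Function.iterate_add_apply, add_comm]
  let C : ℕ → Set X := fun n => ⋃ m, T^[m] ⁻¹' (T^[m + n] '' A)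
  have hCmem : ∀ n x, x ∈ C n ↔ ∃ m, T^[m] x ∈ T^[m + n] '' A := by
    intro n x
    simp only [C, mem_iUnion, mem_preimage]
  have hCmeas : ∀ n, MeasurableSet (C n) := fun n =>
    MeasurableSet.iUnion fun m => (hTmeas.iterate m) (himg _)
  have hC0 : ∀ n, C 0 = T^[n] ⁻¹' (C n) := by
    intro n
    ext x
    rw [mem_preimage, hCmem, hCmem]
    constructor
    · rintro ⟨m, h⟩
      refine ⟨m, ?_⟩
      rw [← Function.iterate_add_apply]
      exact hmono 0 m n x h
    · rintro ⟨m, h⟩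
      refine ⟨m + n, ?_⟩
      rw [Function.iterate_add_apply]
      exact h
  have hCimg : ∀ n, T^[n] '' (C 0) = C n := by
    intro n
    rw [hC0 n, image_preimage_eq _ (hTsurj.iterate n)]
  have hAC : A ⊆ C 0 := fun x hx => (hCmem 0 x).2 ⟨0, x, hx, rfl⟩
  obtain ⟨n, hn⟩ := hai (C 0) (fun n => ⟨C n, hCmeas n, hC0 n⟩)
    (hpos.trans_le (measure_mono hAC))
  rw [hCimg, hCimg] at hn
  have hsub : C (n + 1) ∩ C n ⊆
      ⋃ m, T^[m] ⁻¹' (T^[m + n + 1] '' A ∩ T^[m + n] '' A) := by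
    rintro x ⟨h1, h2⟩
    obtain ⟨p, hp⟩ := (hCmem _ _).1 h1
    obtain ⟨q, hq⟩ := (hCmem _ _).1 h2
    have h1 := hmono _ _ q _ hp
    have h2 := hmono _ _ p _ hq
    rw [add_comm q p] at h2
    exact mem_iUnion.2 ⟨p + q, h1, h2⟩
  have hz : ν (⋃ m, T^[m] ⁻¹' (T^[m + n + 1] '' A ∩ T^[m + n] '' A)) = 0 :=
    measure_iUnion_null fun m => hpre m _ ((himg _).inter (himg _)) (hnull _)
  exact hn.ne' (measure_mono_null hsub hz)
end

section
/- Let (X, 𝒜, ν, T) be a non-singular dynamical system on a σ-finite measure space with ℐ = 𝒯 (mod ν), where ℐ is the invariant σ-algebra and 𝒯 the tail σ-algebra. Then for every A ∈ 𝒜 with ν(A) > 0 and every ℓ ∈ ℤ⁺ there exists n = n(A, ℓ) ∈ ℕ such that ν(T^{k+j}A ∩ T^k A) > 0 whenever k ≥ n and 1 ≤ j ≤ ℓ. -/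
open MeasureTheory Set Filter

/-- if the invariant and tail σ-algebras coincide mod `ν`, then for every
measurable `A` with `ν A > 0` and every `ℓ ≥ 1` there is `n` such that
`ν(T^{k+j} A ∩ T^k A) > 0` whenever `k ≥ n` and `1 ≤ j ≤ ℓ`. -/
theorem intersecting_all_gaps_of_inv_eq_tail
    {X : Type*} [MeasurableSpace X] (ν : Measure X) [SigmaFinite ν] (T : X → X)
    (hTmeas : Measurable T)
    (hTimg : ∀ A : Set X, MeasurableSet A → MeasurableSet (T '' A))
    (hTsurj : Function.Surjective T)
    (hns : ∀ A : Set X, MeasurableSet A → ν A = 0 → ν (T ⁻¹' A) = 0)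
    (heq₁ : ∀ A : Set X, IsTailSet T A → ν (symmDiff (T ⁻¹' A) A) = 0)
    (heq₂ : ∀ A : Set X, IsInvModNu ν T A →
      ∃ B : Set X, IsTailSet T B ∧ ν (symmDiff A B) = 0) :
    ∀ A : Set X, MeasurableSet A → 0 < ν A → ∀ ℓ : ℕ, 1 ≤ ℓ →
      ∃ n : ℕ, ∀ k : ℕ, n ≤ k → ∀ j : ℕ, 1 ≤ j → j ≤ ℓ →
        0 < ν (T^[k + j] '' A ∩ T^[k] '' A) := by
  have hq : Measure.QuasiMeasurePreserving T ν ν :=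
    ⟨hTmeas, Measure.AbsolutelyContinuous.mk fun s hs h0 => by
      rw [Measure.map_apply hTmeas hs]; exact hns s hs h0⟩
  intro A hA hpos ℓ _
  have himg : ∀ k : ℕ, MeasurableSet (T^[k] '' A) := by
    intro k
    induction k with
    | zero => simpa using hA
    | succ k ih =>
      rw [Function.iterate_succ', image_comp]
      exact hTimg _ ih
  -- monotonicity in `k`
  have hstep : ∀ j k : ℕ, ν (T^[k + 1 + j] '' A ∩ T^[k + 1] '' A) = 0 →
      ν (T^[k + j] '' A ∩ T^[k] '' A) = 0 := by
    intro j k h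
    refine measure_mono_null ?_ (hns _ ((himg _).inter (himg _)) h)
    rintro y ⟨⟨a, ha, hay⟩, ⟨b, hb, hby⟩⟩
    refine ⟨⟨a, ha, ?_⟩, ⟨b, hb, ?_⟩⟩
    · rw [show k + 1 + j = (k + j) + 1 by omega, Function.iterate_succ_apply', hay]
    · rw [Function.iterate_succ_apply', hby]
  have hmono : ∀ j k m : ℕ, k ≤ m → 0 < ν (T^[k + j] '' A ∩ T^[k] '' A) →
      0 < ν (T^[m + j] '' A ∩ T^[m] '' A) := by
    intro j k m hkm h
    induction m, hkm using Nat.le_induction with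
    | base => exact h
    | succ m _ ih =>
      rw [pos_iff_ne_zero] at ih ⊢
      exact fun h0 => ih (hstep j m h0)
  -- the tail set generated by `A`
  let S : Set X := ⋃ k : ℕ, T^[k] ⁻¹' (T^[k] '' A)
  have hStail : IsTailSet T S := by
    intro n
    refine ⟨⋃ k : ℕ, T^[k] ⁻¹' (T^[k + n] '' A),
      MeasurableSet.iUnion fun k => (hTmeas.iterate k) (himg _), ?_⟩
    ext x
    simp only [S, mem_iUnion, mem_preimage]
    constructor
    · rintro ⟨k, a, ha, hax⟩
      refine ⟨k, a, ha, ?_⟩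
      rw [← Function.iterate_add_apply, add_comm k n, Function.iterate_add_apply, hax,
        ← Function.iterate_add_apply]
    · rintro ⟨k, h⟩
      exact ⟨k + n, by rwa [Function.iterate_add_apply T k n x]⟩
  have hSinv : ∀ᵐ x ∂ν, x ∈ S → T x ∈ S := by
    refine measure_mono_null ?_ (heq₁ S hStail)
    intro x hx
    simp only [mem_compl_iff, mem_setOf_eq, Classical.not_imp] at hx
    exact Or.inr ⟨hx.1, hx.2⟩
  have hSall : ∀ᵐ x ∂ν, ∀ i : ℕ, T^[i] x ∈ S → T (T^[i] x) ∈ S :=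
    ae_all_iff.2 fun i => (hq.iterate i).ae hSinv
  have hone : ∀ j : ℕ, ∃ k : ℕ, 0 < ν (T^[k + j] '' A ∩ T^[k] '' A) := by
    intro j
    by_contra hcon
    have hnull : ∀ k : ℕ, ν (T^[k + j] '' A ∩ T^[k] '' A) = 0 := by
      intro k
      by_contra h
      exact hcon ⟨k, pos_iff_ne_zero.2 h⟩
    have hae : ∀ᵐ x ∂ν, ∀ k : ℕ, T^[k + j] x ∉ T^[k + j] '' A ∩ T^[k] '' A :=
      ae_all_iff.2 fun k => (hq.iterate (k + j)).ae (measure_eq_zero_iff_ae_notMem.1 (hnull k))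
    have hA0 : ν A = 0 := by
      rw [measure_eq_zero_iff_ae_notMem]
      filter_upwards [hSall, hae] with x h1 h2 hxA
      have hx : ∀ i : ℕ, T^[i] x ∈ S := by
        intro i
        induction i with
        | zero => exact mem_iUnion.2 ⟨0, x, hxA, rfl⟩
        | succ i ih =>
          rw [Function.iterate_succ_apply']
          exact h1 i ih
      obtain ⟨k, hk⟩ := mem_iUnion.1 (hx j)
      refine h2 k ⟨⟨x, hxA, rfl⟩, ?_⟩
      rw [Function.iterate_add_apply]
      exact hk
    exact hpos.ne' hA0
  choose f hf using hone
  refine ⟨(Finset.range (ℓ + 1)).sup f, fun k hk j _ hj => ?_⟩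
  exact hmono j (f j) k
    ((Finset.le_sup (f := f) (Finset.mem_range.2 (by omega))).trans hk) (hf j)
end
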